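/- (Jacobian criterion.) Let K be a field of characteristic zero. A family of m polynomials f_1,…,f_m ∈ K[x_1,…,x_d] is algebraically independent over K if and only if the Jacobian matrix (∂f_i/∂x_j)_{1≤i≤m, 1≤j≤d}, viewed as a matrix over the field of rational functions K(x_1,…,x_d), has rank m. -/

import Mathlib

open MvPolynomial

/-- A family `q : σ → K[x_1,…,x_d]` of polynomials is *algebraically dependent* over `K`
if there is a nonzero polynomial `p ∈ K[y_i : i ∈ σ]` with `p(q) = 0`. -/
def AlgebraicallyDependent (K : Type*) [Field K] {d : ℕ} {σ : Type*}
    (q : σ → MvPolynomial (Fin d) K) : Prop :=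
  ∃ p : MvPolynomial σ K, p ≠ 0 ∧ MvPolynomial.aeval q p = 0

/-- The canonical map from `K[x_1,…,x_d]` into its field of fractions `K(x_1,…,x_d)`. -/
noncomputable def toFrac (K : Type*) [Field K] (d : ℕ) :
    MvPolynomial (Fin d) K →+* FractionRing (MvPolynomial (Fin d) K) :=
  algebraMap (MvPolynomial (Fin d) K) (FractionRing (MvPolynomial (Fin d) K))

/-!
In characteristic zero, elements `v i` of a field extension are algebraically independent exactly
when their Kähler differentials are linearly independent. A family extended to a transcendence basis
makes the field formally étale over the polynomial ring `R[y_i]`, whose differentials are free on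
the `dy_i`. Conversely, differentiating a relation `p(v) = 0` with independent differentials shows
that every `∂p/∂y_i` is again a relation, so the ideal of relations is closed under differentiation
and a nonzero member of least degree would be a constant. Finally, for polynomials in `R(x)` the
rows of the Jacobian matrix are the coordinates of the differentials in the basis `dx_j`.
-/

open KaehlerDifferential

section DifferentialIdeals

variable {R σ : Type*}

lemma totalDegree_pderiv_lt [CommSemiring R] {p : MvPolynomial σ R} {i : σ} (h : pderiv i p ≠ 0) :
    (pderiv i p).totalDegree < p.totalDegree := by
  obtain ⟨s, hs, hdeg⟩ := Finset.exists_mem_eq_sup _ (support_nonempty.mpr h)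
    fun s : σ →₀ ℕ => s.sum fun _ e => e
  have hcoeff : coeff (s + Finsupp.single i 1) p ≠ 0 := by
    rw [mem_support_iff, coeff_pderiv] at hs
    exact left_ne_zero_of_mul hs
  calc (pderiv i p).totalDegree
    _ = s.degree := hdeg
    _ < (s + Finsupp.single i 1).degree := by simp
    _ ≤ p.totalDegree := le_totalDegree (mem_support_iff.mpr hcoeff)

variable [CommRing R] [IsAddTorsionFree R]

lemma eq_C_of_pderiv_eq_zero {p : MvPolynomial σ R} (h : ∀ i, pderiv i p = 0) :
    p = C (constantCoeff p) := by
  refine MvPolynomial.coe_injective σ R (MvPowerSeries.pderiv.ext (fun i => ?_) ?_)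
  · simp [MvPowerSeries.pderiv_coe, h]
  · rw [← MvPowerSeries.coeff_zero_eq_constantCoeff_apply, coeff_coe, coe_C,
      MvPowerSeries.constantCoeff_C, constantCoeff_eq]

lemma eq_bot_of_pderiv_mem {I : Ideal (MvPolynomial σ R)} (hI : ∀ p ∈ I, ∀ i, pderiv i p ∈ I)
    (hC : ∀ c, C c ∈ I → c = 0) : I = ⊥ := by
  refine (Submodule.eq_bot_iff I).mpr fun p hp => ?_
  induction hn : p.totalDegree using Nat.strong_induction_on generalizing p with
  | _ n ih =>
  have hpderiv (i : σ) : pderiv i p = 0 := by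
    by_contra hne
    exact hne (ih _ (hn ▸ totalDegree_pderiv_lt hne) _ (hI p hp i) rfl)
  rw [eq_C_of_pderiv_eq_zero hpderiv] at hp ⊢
  rw [hC _ hp, C_0]

end DifferentialIdeals

section MvPolynomialAlgebra

variable (R σ A : Type*) [CommRing R] [CommRing A] [Algebra R A] [Algebra (MvPolynomial σ R) A]
  [IsScalarTower R (MvPolynomial σ R) A]

variable {R σ} in
lemma D_algebraMap_eq_linearCombination (p : MvPolynomial σ R) :
    D R A (algebraMap _ A p) = Finsupp.linearCombination A
      (fun i => D R A (algebraMap _ A (X i : MvPolynomial σ R)))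
      (((mvPolynomialBasis R σ).repr (D R _ p)).mapRange (algebraMap _ A) (map_zero _)) := by
  rw [← map_D R R (MvPolynomial σ R) A, ← (mvPolynomialBasis R σ).linearCombination_repr (D R _ p)]
  simp [Finsupp.linearCombination_apply, Finsupp.sum_mapRange_index, map_finsuppSum]

variable {R σ A} in
lemma algebraMap_pderiv_eq_zero
    (hX : LinearIndependent A fun i => D R A (algebraMap _ A (X i : MvPolynomial σ R)))
    {p : MvPolynomial σ R} (hp : algebraMap _ A p = 0) (i : σ) :
    algebraMap _ A (pderiv i p) = 0 := by
  have hDp := D_algebraMap_eq_linearCombination A p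
  rw [hp, map_zero] at hDp
  have hcoord := DFunLike.congr_fun (linearIndependent_iff.mp hX _ hDp.symm) i
  rwa [Finsupp.mapRange_apply, mvPolynomialBasis_repr_apply] at hcoord

/-- The basis of the differentials of a formally étale algebra over `R[x_i]` formed by the `dx_i`,
obtained by base change from the basis of the differentials of `R[x_i]`. -/
noncomputable def kaehlerBasis [Algebra.FormallyEtale (MvPolynomial σ R) A] :
    Module.Basis σ A (Ω[A⁄R]) :=
  ((mvPolynomialBasis R σ).baseChange A).map
    (tensorKaehlerEquivOfFormallyEtale R (MvPolynomial σ R) A)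

variable [Algebra.FormallyEtale (MvPolynomial σ R) A]

lemma kaehlerBasis_apply (i : σ) :
    kaehlerBasis R σ A i = D R A (algebraMap _ A (X i : MvPolynomial σ R)) := by
  simp [kaehlerBasis]

variable {R σ} in
lemma kaehlerBasis_repr_D_algebraMap (p : MvPolynomial σ R) (i : σ) :
    (kaehlerBasis R σ A).repr (D R A (algebraMap _ A p)) i = algebraMap _ A (pderiv i p) := by
  rw [kaehlerBasis, Module.Basis.map_repr, LinearEquiv.trans_apply,
    tensorKaehlerEquivOfFormallyEtale_symm_D_algebraMap]
  simp [mvPolynomialBasis_repr_apply, Algebra.smul_def]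

end MvPolynomialAlgebra

section AlgebraicIndependence

variable {R A L ι : Type*} [CommRing R] [Field L] [Algebra R L]

lemma algebraicIndependent_of_linearIndependent_D [IsAddTorsionFree R] [CommRing A] [Algebra R A]
    [FaithfulSMul R A] {v : ι → A} (hv : LinearIndependent A fun i => D R A (v i)) :
    AlgebraicIndependent R v := by
  let : Algebra (MvPolynomial ι R) A := (aeval v).toAlgebra
  have : IsScalarTower R (MvPolynomial ι R) A :=
    .of_algebraMap_eq' (aeval v).comp_algebraMap.symm
  have hX (i : ι) : algebraMap _ A (X i : MvPolynomial ι R) = v i := aeval_X v i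
  refine algebraicIndependent_iff_ker_eq_bot.mpr (eq_bot_of_pderiv_mem (fun p hp i => ?_) ?_)
  · exact algebraMap_pderiv_eq_zero (by simpa only [hX] using hv) hp i
  · intro c hc
    simpa using hc

lemma formallyEtale_of_isAlgebraic [CommRing A] [IsDomain A] [CharZero A] [Algebra A L]
    [FaithfulSMul A L] [Algebra.IsAlgebraic A L] : Algebra.FormallyEtale A L := by
  let : Algebra (FractionRing A) L := FractionRing.liftAlgebra A L
  have : IsScalarTower A (FractionRing A) L := FractionRing.isScalarTower_liftAlgebra A L
  have : Algebra.IsAlgebraic (FractionRing A) L :=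
    (IsFractionRing.comap_isAlgebraic_iff (A := A)).mp inferInstance
  have : Algebra.FormallyEtale (FractionRing A) L := .of_isSeparable _ L
  have : Algebra.FormallyEtale A (FractionRing A) := .of_isLocalization (nonZeroDivisors A)
  exact .comp A (FractionRing A) L

variable [IsDomain R] [CharZero R] {v : ι → L}

lemma linearIndependent_D_of_isTranscendenceBasis (hv : IsTranscendenceBasis R v) :
    LinearIndependent L fun i => D R L (v i) := by
  let : Algebra (MvPolynomial ι R) L := (aeval v).toAlgebra
  have : IsScalarTower R (MvPolynomial ι R) L :=
    .of_algebraMap_eq' (aeval v).comp_algebraMap.symm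
  have algebraMap_eq (p : MvPolynomial ι R) : algebraMap _ L p = aeval v p := rfl
  have : FaithfulSMul (MvPolynomial ι R) L := (faithfulSMul_iff_algebraMap_injective _ L).mpr hv.1
  have : Algebra.IsAlgebraic (MvPolynomial ι R) L := by
    have := hv.isAlgebraic
    exact .of_ringHom_of_comp_eq hv.1.aevalEquiv (RingHom.id L) hv.1.aevalEquiv.surjective
      Function.injective_id (by ext <;> simp [algebraMap_eq])
  have : Algebra.FormallyEtale (MvPolynomial ι R) L := formallyEtale_of_isAlgebraic
  have hbasis : ⇑(kaehlerBasis R ι L) = fun i => D R L (v i) := by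
    ext i
    rw [kaehlerBasis_apply, algebraMap_eq, aeval_X]
  exact hbasis ▸ (kaehlerBasis R ι L).linearIndependent

lemma linearIndependent_D_of_algebraicIndependent (hv : AlgebraicIndependent R v) :
    LinearIndependent L fun i => D R L (v i) := by
  obtain ⟨t, hvt, ht⟩ := exists_isTranscendenceBasis_superset hv.coe_range
  exact (linearIndependent_D_of_isTranscendenceBasis ht).comp (fun i => ⟨v i, hvt ⟨i, rfl⟩⟩)
    fun i j hij => hv.injective (congrArg Subtype.val hij)

lemma algebraicIndependent_iff_linearIndependent_D [FaithfulSMul R L] :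
    AlgebraicIndependent R v ↔ LinearIndependent L fun i => D R L (v i) :=
  ⟨linearIndependent_D_of_algebraicIndependent, algebraicIndependent_of_linearIndependent_D⟩

end AlgebraicIndependence

section Jacobian

variable {R σ ι : Type*}

/-- The Jacobian matrix `(∂f_i/∂x_j)` of a family of polynomials, with rows indexed by the family
and columns by the variables. -/
noncomputable def jacobianMatrix [CommSemiring R] (f : ι → MvPolynomial σ R) :
    Matrix ι σ (MvPolynomial σ R) :=
  .of fun i j => pderiv j (f i)

variable [CommRing R]

lemma linearIndependent_row_jacobianMatrix_iff (A : Type*) [CommRing A] [Algebra R A]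
    [Algebra (MvPolynomial σ R) A] [IsScalarTower R (MvPolynomial σ R) A]
    [Algebra.FormallyEtale (MvPolynomial σ R) A] (f : ι → MvPolynomial σ R) :
    LinearIndependent A ((jacobianMatrix f).map (algebraMap _ A)).row ↔
      LinearIndependent A fun i => D R A (algebraMap _ A (f i)) := by
  let coords : Ω[A⁄R] →ₗ[A] σ → A := Finsupp.lcoeFun ∘ₗ (kaehlerBasis R σ A).repr.toLinearMap
  have hcoords : LinearMap.ker coords = ⊥ := LinearMap.ker_eq_bot.mpr
    (DFunLike.coe_injective.comp (kaehlerBasis R σ A).repr.injective)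
  rw [← coords.linearIndependent_iff hcoords]
  congr! 1
  ext i j
  exact (kaehlerBasis_repr_D_algebraMap A (f i) j).symm

theorem jacobian_criterion_general [IsDomain R] [CharZero R] (F : Type*) [Field F]
    [Algebra (MvPolynomial σ R) F] [IsFractionRing (MvPolynomial σ R) F]
    (f : ι → MvPolynomial σ R) :
    AlgebraicIndependent R f ↔
      LinearIndependent F ((jacobianMatrix f).map (algebraMap _ F)).row := by
  let : Algebra R F := ((algebraMap (MvPolynomial σ R) F).comp C).toAlgebra
  have : IsScalarTower R (MvPolynomial σ R) F := .of_algebraMap_eq fun _ => rfl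
  have hinj := IsFractionRing.injective (MvPolynomial σ R) F
  have : FaithfulSMul R F :=
    (faithfulSMul_iff_algebraMap_injective R F).mpr (hinj.comp (C_injective σ R))
  have : Algebra.FormallyEtale (MvPolynomial σ R) F :=
    .of_isLocalization (nonZeroDivisors (MvPolynomial σ R))
  calc AlgebraicIndependent R f
    _ ↔ AlgebraicIndependent R (algebraMap _ F ∘ f) :=
      ((IsScalarTower.toAlgHom R (MvPolynomial σ R) F).algebraicIndependent_iff hinj).symm
    _ ↔ LinearIndependent F fun i => D R F (algebraMap _ F (f i)) :=
      algebraicIndependent_iff_linearIndependent_D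
    _ ↔ _ := (linearIndependent_row_jacobianMatrix_iff F f).symm

end Jacobian

lemma not_algebraicallyDependent_iff {K σ : Type*} [Field K] {d : ℕ}
    {f : σ → MvPolynomial (Fin d) K} :
    ¬ AlgebraicallyDependent K f ↔ AlgebraicIndependent K f := by
  simp only [AlgebraicallyDependent, algebraicIndependent_iff, not_exists, not_and', not_not]

lemma rank_eq_card_iff_linearIndependent_row {F m n : Type*} [Field F] [Fintype m] [Fintype n]
    {M : Matrix m n F} : M.rank = Fintype.card m ↔ LinearIndependent F M.row := by
  rw [linearIndependent_iff_card_eq_finrank_span, M.rank_eq_finrank_span_row, Set.finrank, eq_comm]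

/-- **Jacobian criterion.** Over a field `K` of characteristic zero, a family of `m` polynomials
`f_1,…,f_m ∈ K[x_1,…,x_d]` is algebraically independent over `K` if and only if the Jacobian
matrix `(∂f_i/∂x_j)`, viewed over the field of rational functions `K(x_1,…,x_d)`, has rank `m`. -/
theorem jacobian_criterion {K : Type*} [Field K] [CharZero K] {d m : ℕ}
    (f : Fin m → MvPolynomial (Fin d) K) :
    ¬ AlgebraicallyDependent K f ↔
      (Matrix.of fun (i : Fin m) (j : Fin d) =>
        toFrac K d (MvPolynomial.pderiv j (f i))).rank = m := by
  rw [not_algebraicallyDependent_iff,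
    jacobian_criterion_general (FractionRing (MvPolynomial (Fin d) K)),
    ← rank_eq_card_iff_linearIndependent_row, Fintype.card_fin]
  rfl
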